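/- Let α ∈ (0,1) be irrational with continued fraction expansion α = [a_1,a_2,a_3,...]. For every n ≥ 4, the word s_{n−1}^{a_n + 2} (the (a_n + 2)-fold concatenation of s_{n−1} with itself) is a prefix of the word s_{n−1} s_n s_{n−1}. In particular, s_{n−1} s_n s_{n−1} begins with the cube s_{n−1} s_{n−1} s_{n−1}. -/

import Mathlib

/-!
Since `s_n = s_{n-1}^{a_n} s_{n-2}`, the word `s_{n-1} s_n s_{n-1}` equals
`s_{n-1}^{a_n + 1} s_{n-2} s_{n-1}`, so it suffices that `s_{n-1}` is a prefix of
`s_{n-2} s_{n-1}` (`sw_prefix_append`). Writing `s_{n-1} = s_{n-2}^a s_{n-3}`, this follows from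
`s_{n-2}^a s_{n-3}` being a prefix of `s_{n-2}^a s_{n-2}`, as `s_{n-3}` is a prefix of `s_{n-2}`.
The last fact, and the cube, use that every partial quotient is at least `1` (`cfa_pos`), which
holds because the Gauss map preserves the irrational numbers of `(0,1)`.
-/

/-- Partial quotients of the continued fraction expansion of `α ∈ (0,1)`:
`cfa α n = a_n` for `n ≥ 1`, computed via the Gauss map. -/
noncomputable def cfa (α : ℝ) (n : ℕ) : ℕ :=
  ⌊((fun x : ℝ => Int.fract x⁻¹)^[n - 1] α)⁻¹⌋₊

/-- The standard Sturmian words, with index shifted by one: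
`sw α (n+1)` is the word `s_n` of the paper (so `sw α 0 = s₋₁ = 1`, `sw α 1 = s₀ = 0`,
`sw α 2 = s₁ = s₀^(a₁-1) s₋₁`, and `s_n = s_{n-1}^{a_n} s_{n-2}` for `n ≥ 2`).
The letter `1` is encoded by `true` and `0` by `false`. -/
noncomputable def sw (α : ℝ) : ℕ → List Bool
  | 0 => [true]
  | 1 => [false]
  | 2 => (List.replicate (cfa α 1 - 1) [false]).flatten ++ [true]
  | n + 3 => (List.replicate (cfa α (n + 2)) (sw α (n + 2))).flatten ++ sw α (n + 1)

/-- Denominators of the rational approximants: `q₀ = 1`, `q₁ = a₁`, `qₙ = aₙ q_{n-1} + q_{n-2}`. -/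
noncomputable def qden (α : ℝ) : ℕ → ℕ
  | 0 => 1
  | 1 => cfa α 1
  | n + 2 => cfa α (n + 2) * qden α (n + 1) + qden α n

open scoped Classical in
/-- The Sturmian potential `v_{α,θ}(n) = χ_{[1-α,1)}(nα + θ mod 1)`, with value `1`
encoded by `true` and `0` by `false` (note `Int.fract x < 1` always). -/
noncomputable def sturmian (α θ : ℝ) (n : ℤ) : Bool :=
  if 1 - α ≤ Int.fract ((n : ℝ) * α + θ) then true else false

/-- An `(n,α)`-partition of a two-sided sequence `f : ℤ → Bool`, given by the
break points `d : ℤ → ℤ` (interval `I_j = {d j, …, d (j+1) - 1}`) and blocks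
`z : ℤ → List Bool`: the `d j` are strictly increasing, `0 ∈ I₀`, each block is
`s_n = sw α (n+1)` or `s_{n-1} = sw α n`, consecutive intervals are adjacent with
`I_j` of length `(z j).length`, and `f` restricted to `I_j` spells the word `z j`. -/
def IsNPartition (α : ℝ) (n : ℕ) (f : ℤ → Bool) (d : ℤ → ℤ) (z : ℤ → List Bool) : Prop :=
  StrictMono d ∧
  (d 0 ≤ 0 ∧ 0 < d 1) ∧
  (∀ j : ℤ, z j = sw α (n + 1) ∨ z j = sw α n) ∧
  (∀ j : ℤ, d (j + 1) = d j + (z j).length) ∧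
  (∀ j : ℤ, z j = (List.range (z j).length).map fun k => f (d j + (k : ℤ)))

/-- The finite word `x` occurs in the two-sided sequence `v` adjacent to `i`:
either `x = v_i v_{i+1} … v_{i+l-1}` or `x = v_{i-l+1} … v_{i-1} v_i`. -/
def AdjacentTo (v : ℤ → Bool) (x : List Bool) (i : ℤ) : Prop :=
  x = ((List.range x.length).map fun k => v (i + (k : ℤ))) ∨
  x = ((List.range x.length).map fun k => v (i - (x.length : ℤ) + 1 + (k : ℤ)))

/-- The Gauss map preserves the irrational numbers of `(0,1)`. -/
lemma gauss_iterate_mem {α : ℝ} (h0 : 0 < α) (h1 : α < 1) (hirr : Irrational α) (k : ℕ) :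
    0 < (fun x : ℝ => Int.fract x⁻¹)^[k] α ∧ (fun x : ℝ => Int.fract x⁻¹)^[k] α < 1 ∧
      Irrational ((fun x : ℝ => Int.fract x⁻¹)^[k] α) := by
  induction k with
  | zero => exact ⟨h0, h1, hirr⟩
  | succ k ih =>
    rw [Function.iterate_succ_apply']
    set x := (fun x : ℝ => Int.fract x⁻¹)^[k] α
    have hx : Irrational (Int.fract x⁻¹) := by
      rw [← Int.self_sub_floor]
      exact ih.2.2.inv.sub_intCast _
    exact ⟨lt_of_le_of_ne (Int.fract_nonneg _) hx.ne_zero.symm, Int.fract_lt_one _, hx⟩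

lemma cfa_pos {α : ℝ} (h0 : 0 < α) (h1 : α < 1) (hirr : Irrational α) (n : ℕ) :
    0 < cfa α n := by
  obtain ⟨hp, hl, -⟩ := gauss_iterate_mem h0 h1 hirr (n - 1)
  exact Nat.floor_pos.2 ((one_le_inv₀ hp).2 hl.le)

lemma flatten_replicate_append_self (k : ℕ) (w : List Bool) :
    (List.replicate k w).flatten ++ w = w ++ (List.replicate k w).flatten := by
  rw [← List.flatten_cons, ← List.replicate_succ, List.replicate_succ', List.flatten_concat]

/-- `s_{m+1}` is a prefix of `s_{m+2}`; recall that `sw` has its index shifted by one. -/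
lemma sw_prefix_succ {α : ℝ} {m : ℕ} (h : 0 < cfa α (m + 2)) :
    sw α (m + 2) <+: sw α (m + 3) := by
  obtain ⟨k, hk⟩ := Nat.exists_eq_succ_of_ne_zero h.ne'
  rw [sw, hk, List.replicate_succ, List.flatten_cons, List.append_assoc]
  exact List.prefix_append _ _

lemma sw_prefix_append {α : ℝ} {m : ℕ} (h : 0 < cfa α (m + 2)) :
    sw α (m + 4) <+: sw α (m + 3) ++ sw α (m + 4) := by
  have hs : sw α (m + 4) =
      (List.replicate (cfa α (m + 3)) (sw α (m + 3))).flatten ++ sw α (m + 2) := by rw [sw]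
  rw [hs, ← List.append_assoc, ← flatten_replicate_append_self, List.append_assoc]
  exact (List.prefix_append_right_inj _).2
    ((sw_prefix_succ h).trans (List.prefix_append _ _))

/-- For every `n ≥ 4`, the word `s_{n-1}^{a_n + 2}` is a prefix of `s_{n-1} s_n s_{n-1}`;
in particular `s_{n-1} s_n s_{n-1}` begins with the cube `s_{n-1} s_{n-1} s_{n-1}`
(here `s_n = sw α (n+1)`, `s_{n-1} = sw α n`, `a_n = cfa α n`). -/
theorem sturmianWord_power_prefix
    (α : ℝ) (hα0 : 0 < α) (hα1 : α < 1) (hirr : Irrational α)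
    (n : ℕ) (hn : 4 ≤ n) :
    (List.replicate (cfa α n + 2) (sw α n)).flatten <+:
        sw α n ++ sw α (n + 1) ++ sw α n ∧
      sw α n ++ sw α n ++ sw α n <+: sw α n ++ sw α (n + 1) ++ sw α n := by
  obtain ⟨m, rfl⟩ := Nat.exists_eq_add_of_le' hn
  have hs : sw α (m + 4 + 1) =
      (List.replicate (cfa α (m + 4)) (sw α (m + 4))).flatten ++ sw α (m + 3) := by rw [sw]
  have hpow : (List.replicate (cfa α (m + 4) + 2) (sw α (m + 4))).flatten <+:
      sw α (m + 4) ++ sw α (m + 4 + 1) ++ sw α (m + 4) := by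
    rw [hs, List.replicate_succ, List.replicate_succ', List.flatten_cons, List.flatten_concat]
    simp only [List.append_assoc, List.prefix_append_right_inj]
    exact sw_prefix_append (cfa_pos hα0 hα1 hirr _)
  refine ⟨hpow, List.IsPrefix.trans ?_ hpow⟩
  obtain ⟨k, hk⟩ := Nat.exists_eq_succ_of_ne_zero (cfa_pos hα0 hα1 hirr (m + 4)).ne'
  rw [hk]
  simp only [Nat.succ_eq_add_one, List.replicate_succ, List.flatten_cons, ← List.append_assoc]
  exact List.prefix_append _ _
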